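/- Let W ∈ ℝ^{d_o×d_i}, K₀ ∈ ℝ^{d_i×m₀}, K_new ∈ ℝ^{d_i×m}, V_new ∈ ℝ^{d_o×m}, and set V₀ := W K₀. Assume the symmetric positive semidefinite matrix K₀K₀ᵀ + K_new K_newᵀ is invertible. Then the matrix Δ* := (V_new − W K_new) K_newᵀ (K₀K₀ᵀ + K_new K_newᵀ)⁻¹ is the unique minimizer over Δ ∈ ℝ^{d_o×d_i} of the objective Δ ↦ ‖(W + Δ)[K₀ | K_new] − [V₀ | V_new]‖_F². -/

import Mathlib

open Matrix BigOperators

noncomputable section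

/-- Squared Frobenius norm of a real matrix. -/
def frobSq {n m : Type*} [Fintype n] [Fintype m] (A : Matrix n m ℝ) : ℝ :=
  ∑ i, ∑ j, (A i j) ^ 2

theorem frobSq_eq_trace {n m : Type*} [Fintype n] [Fintype m] (A : Matrix n m ℝ) :
    frobSq A = (A * Aᵀ).trace := by
  simp [frobSq, Matrix.trace, Matrix.mul_apply, sq]

theorem frobSq_nonneg {n m : Type*} [Fintype n] [Fintype m] (A : Matrix n m ℝ) :
    0 ≤ frobSq A :=
  Finset.sum_nonneg fun _ _ => Finset.sum_nonneg fun _ _ => sq_nonneg _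

theorem eq_zero_of_frobSq {n m : Type*} [Fintype n] [Fintype m] (A : Matrix n m ℝ)
    (h : frobSq A ≤ 0) : A = 0 := by
  have h0 : frobSq A = 0 := le_antisymm h (frobSq_nonneg A)
  ext i j
  have h1 := (Finset.sum_eq_zero_iff_of_nonneg
    (fun _ _ => Finset.sum_nonneg fun _ _ => sq_nonneg _)).1 h0 i (Finset.mem_univ i)
  have h2 := (Finset.sum_eq_zero_iff_of_nonneg (fun _ _ => sq_nonneg _)).1 h1 j
    (Finset.mem_univ j)
  exact pow_eq_zero_iff (two_ne_zero) |>.1 h2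

theorem frobSq_add_of_orth {n k m : Type*} [Fintype n] [Fintype k] [Fintype m]
    (R : Matrix n m ℝ) (D : Matrix n k ℝ) (K : Matrix k m ℝ) (h : R * Kᵀ = 0) :
    frobSq (R + D * K) = frobSq R + frobSq (D * K) := by
  have h1 : R * (D * K)ᵀ = 0 := by
    rw [Matrix.transpose_mul, ← Matrix.mul_assoc, h, Matrix.zero_mul]
  have h2 : (D * K) * Rᵀ = 0 := by
    have := congrArg Matrix.transpose h1
    simpa only [Matrix.transpose_mul, Matrix.transpose_transpose, Matrix.transpose_zero] using this
  simp only [frobSq_eq_trace]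
  rw [Matrix.transpose_add, Matrix.add_mul, Matrix.mul_add, Matrix.mul_add, h1, h2]
  simp

theorem one_time_edit_unique_minimizer
    {dOut dIn m₀ m : ℕ}
    (W : Matrix (Fin dOut) (Fin dIn) ℝ)
    (K₀ : Matrix (Fin dIn) (Fin m₀) ℝ)
    (Knew : Matrix (Fin dIn) (Fin m) ℝ)
    (Vnew : Matrix (Fin dOut) (Fin m) ℝ)
    (hinv : Invertible (K₀ * K₀ᵀ + Knew * Knewᵀ)) :
    let V₀ : Matrix (Fin dOut) (Fin m₀) ℝ := W * K₀
    let Δstar : Matrix (Fin dOut) (Fin dIn) ℝ :=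
      (Vnew - W * Knew) * Knewᵀ * (K₀ * K₀ᵀ + Knew * Knewᵀ)⁻¹
    let f : Matrix (Fin dOut) (Fin dIn) ℝ → ℝ := fun Δ =>
      frobSq ((W + Δ) * Matrix.fromCols K₀ Knew - Matrix.fromCols V₀ Vnew)
    (∀ Δ, f Δstar ≤ f Δ) ∧ (∀ Δ, f Δ ≤ f Δstar → Δ = Δstar) := by
  intro V₀ Δstar f
  have hS : IsUnit (K₀ * K₀ᵀ + Knew * Knewᵀ).det :=
    (Matrix.isUnit_iff_isUnit_det _).1 (isUnit_of_invertible _)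
  have hKK : Matrix.fromCols K₀ Knew * (Matrix.fromCols K₀ Knew)ᵀ
      = K₀ * K₀ᵀ + Knew * Knewᵀ := by
    rw [Matrix.transpose_fromCols, Matrix.fromCols_mul_fromRows]
  have hΔ : Δstar * (K₀ * K₀ᵀ + Knew * Knewᵀ) = (Vnew - W * Knew) * Knewᵀ :=
    Matrix.nonsing_inv_mul_cancel_right _ _ hS
  have horth : ((W + Δstar) * Matrix.fromCols K₀ Knew - Matrix.fromCols V₀ Vnew)
      * (Matrix.fromCols K₀ Knew)ᵀ = 0 := by
    rw [Matrix.sub_mul, Matrix.mul_assoc, hKK, Matrix.add_mul, hΔ, Matrix.transpose_fromCols,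
      Matrix.fromCols_mul_fromRows, Matrix.mul_add, Matrix.sub_mul]
    simp only [V₀, Matrix.mul_assoc]
    abel
  have key : ∀ Δ, f Δ = f Δstar + frobSq ((Δ - Δstar) * Matrix.fromCols K₀ Knew) := by
    intro Δ
    simp only [f]
    rw [← frobSq_add_of_orth _ _ _ horth]
    congr 1
    simp only [Matrix.add_mul, Matrix.sub_mul]
    abel
  refine ⟨fun Δ => ?_, fun Δ h => ?_⟩
  · rw [key Δ]
    exact le_add_of_nonneg_right (frobSq_nonneg _)
  · rw [key Δ] at h
    have h0 := eq_zero_of_frobSq _ (by linarith :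
      frobSq ((Δ - Δstar) * Matrix.fromCols K₀ Knew) ≤ 0)
    have h1 : (Δ - Δstar) * (K₀ * K₀ᵀ + Knew * Knewᵀ) = 0 := by
      rw [← hKK, ← Matrix.mul_assoc, h0, Matrix.zero_mul]
    have h2 := Matrix.mul_nonsing_inv_cancel_right _ (Δ - Δstar) hS
    rw [h1, Matrix.zero_mul] at h2
    exact sub_eq_zero.1 h2.symm
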